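/- Let L be a complete graded Lie algebra over ℚ concentrated in nonnegative degrees, and suppose there is an integer n ≥ 1 such that for all x₁, …, xₙ ∈ L₀ the composite (e^{ad_{x₁}} − id) ∘ ⋯ ∘ (e^{ad_{xₙ}} − id) = 0. Then ad_{x₁} ∘ ⋯ ∘ ad_{xₙ} = 0 for all x₁, …, xₙ ∈ L₀; in particular L₀ acts nilpotently on L by the adjoint action. -/

import Mathlib

namespace Paper

universe u

/-- Cast along an equality of degrees in a graded object. -/
def gcast {L : ℤ → Type u} {p q : ℤ} (h : p = q) (x : L p) : L q := h ▸ x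

/-- A complete graded Lie algebra over `ℚ`: a graded Lie algebra `L = {L_p}_{p ∈ ℤ}`
(graded antisymmetry and Jacobi identity with Koszul signs), equipped with a decreasing
filtration `L = F¹ ⊇ F² ⊇ ⋯` of Lie ideals satisfying `[F^m, F^n] ⊆ F^{m+n}`, which is
Hausdorff and complete: series with terms of increasing filtration degree converge, and
the limits are unique (equivalently, `L ≅ lim_n L/Fⁿ`).  Completeness guarantees the
convergence of the operator series `e^{ad_x}` for `x ∈ L₀`, and of the
Baker–Campbell–Hausdorff product `x * y = log(eˣeʸ)` on `L₀`; the latter is supplied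
together with its group laws and its characterizing first-order approximation. -/
structure CompleteGradedLie : Type (u + 1) where
  /-- the degree-`p` component -/
  L : ℤ → Type u
  [acg : ∀ p, AddCommGroup (L p)]
  [mod : ∀ p, Module ℚ (L p)]
  /-- the graded Lie bracket -/
  br : ∀ {p q : ℤ}, L p → L q → L (p + q)
  br_add_left : ∀ {p q : ℤ} (x y : L p) (z : L q), br (x + y) z = br x z + br y z
  br_add_right : ∀ {p q : ℤ} (x : L p) (y z : L q), br x (y + z) = br x y + br x z
  br_smul_left : ∀ {p q : ℤ} (c : ℚ) (x : L p) (z : L q), br (c • x) z = c • br x z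
  br_smul_right : ∀ {p q : ℤ} (c : ℚ) (x : L p) (z : L q), br x (c • z) = c • br x z
  /-- graded antisymmetry -/
  br_antisymm : ∀ {p q : ℤ} (x : L p) (y : L q),
    br x y = -((-1 : ℚ) ^ (p * q) • gcast (L := L) (add_comm q p) (br y x))
  /-- graded Jacobi identity -/
  br_jacobi : ∀ {p q r : ℤ} (x : L p) (y : L q) (z : L r),
    br x (br y z) = gcast (L := L) (add_assoc p q r) (br (br x y) z)
      + (-1 : ℚ) ^ (p * q) • gcast (L := L) (add_left_comm q p r) (br y (br x z))
  /-- the filtration -/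
  F : ℕ → ∀ p : ℤ, Submodule ℚ (L p)
  F_one : ∀ p, F 1 p = ⊤
  F_antitone : ∀ {m n : ℕ}, m ≤ n → ∀ p, F n p ≤ F m p
  F_br : ∀ {m n : ℕ} {p q : ℤ} {x : L p} {y : L q},
    x ∈ F m p → y ∈ F n q → br x y ∈ F (m + n) (p + q)
  /-- the filtration is Hausdorff -/
  hausdorff : ∀ (p : ℤ) (x : L p), (∀ n, x ∈ F n p) → x = 0
  /-- the filtration is complete: series with terms of increasing filtration
  degree converge -/
  complete : ∀ (p : ℤ) (a : ℕ → L p), (∀ n, a n ∈ F n p) →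
    ∃ x : L p, ∀ n, x - (∑ k ∈ Finset.range n, a k) ∈ F n p
  /-- the Baker–Campbell–Hausdorff product `bch x y = log(eˣeʸ)` on `L₀`,
  convergent by completeness -/
  bch : L 0 → L 0 → L 0
  bch_assoc : ∀ x y z, bch (bch x y) z = bch x (bch y z)
  bch_zero_left : ∀ x, bch 0 x = x
  bch_zero_right : ∀ x, bch x 0 = x
  bch_neg_left : ∀ x, bch (-x) x = 0
  /-- `bch x y = x + y + ½[x,y] + ⋯` agrees with `x + y` modulo `F²` -/
  bch_approx : ∀ x y, bch x y - (x + y) ∈ F 2 0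

attribute [instance] CompleteGradedLie.acg CompleteGradedLie.mod

namespace CompleteGradedLie

variable (S : CompleteGradedLie.{u})

/-- The group structure on `L₀` given by the Baker–Campbell–Hausdorff product. -/
def bchGroup : Group (S.L 0) where
  mul := S.bch
  one := 0
  inv x := -x
  mul_assoc := S.bch_assoc
  one_mul := S.bch_zero_left
  mul_one := S.bch_zero_right
  inv_mul_cancel := S.bch_neg_left

/-- The bracket of two degree-zero elements, landing again in degree zero. -/
def br0 (x y : S.L 0) : S.L 0 := gcast (L := S.L) (zero_add 0) (S.br x y)

/-- The adjoint operator `ad_x = [x, ·] : L_p → L_p` of a degree-zero element. -/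
def ad (x : S.L 0) {p : ℤ} (y : S.L p) : S.L p := gcast (L := S.L) (zero_add p) (S.br x y)

/-- Iterates `ad_x^k` of the adjoint operator of a degree-zero element. -/
def adIter (x : S.L 0) {p : ℤ} : ℕ → S.L p → S.L p
  | 0, y => y
  | k + 1, y => S.ad x (adIter x k y)

/-- The iterated adjoint action `ad_{x₁} ∘ ⋯ ∘ ad_{xₖ}` of a list of degree-zero
elements. -/
def adList {p : ℤ} : List (S.L 0) → S.L p → S.L p
  | [], y => y
  | x :: xs, y => S.ad x (adList xs y)

/-- The iterated bracket `[x₁, [x₂, ⋯ [xₖ, y] ⋯ ]]` in degree zero. -/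
def nestedBr : List (S.L 0) → S.L 0 → S.L 0
  | [], y => y
  | x :: xs, y => S.br0 x (nestedBr xs y)

lemma gcast_mem {p q : ℤ} (h : p = q) {n : ℕ} {x : S.L p} (hx : x ∈ S.F n p) :
    gcast (L := S.L) h x ∈ S.F n q := by subst h; exact hx

lemma mem_F_one {p : ℤ} (x : S.L p) : x ∈ S.F 1 p := by rw [S.F_one]; trivial

lemma adIter_mem (x : S.L 0) {p : ℤ} (k : ℕ) (y : S.L p) :
    S.adIter x k y ∈ S.F (k + 1) p := by
  induction k with
  | zero => simpa [adIter] using S.mem_F_one y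
  | succ k ih =>
      have h := S.F_br (S.mem_F_one x) ih
      have h2 : gcast (L := S.L) (zero_add p) (S.br x (S.adIter x k y))
          ∈ S.F (1 + (k + 1)) p := S.gcast_mem _ h
      have h3 : (1 + (k + 1)) = (k + 1 + 1) := by omega
      rw [h3] at h2
      simpa [adIter, ad] using h2

/-- The operator `e^{ad_x} = Σ_k ad_x^k / k!` on `L_p`, for `x ∈ L₀`; the series
converges by completeness of the filtration. -/
noncomputable def expAd (x : S.L 0) {p : ℤ} (y : S.L p) : S.L p :=
  Classical.choose (S.complete p
    (fun k => ((Nat.factorial k : ℚ))⁻¹ • S.adIter x k y)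
    (fun k => Submodule.smul_mem _ _
      (S.F_antitone (Nat.le_succ k) p (S.adIter_mem x k y))))

/-- The operator `φ_x = e^{ad_x} − id`. -/
noncomputable def phi (x : S.L 0) {p : ℤ} (y : S.L p) : S.L p := S.expAd x y - y

/-- The iterated composite `φ_{x₁} ∘ ⋯ ∘ φ_{xₖ}` of operators `φ_x = e^{ad_x} − id`. -/
noncomputable def phiList {p : ℤ} : List (S.L 0) → S.L p → S.L p
  | [], y => y
  | x :: xs, y => S.phi x (phiList xs y)

/-- The lower central series `L¹ = L ⊇ L² ⊇ ⋯`, `Lⁿ = [L, Lⁿ⁻¹]`, of a graded Lie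
algebra (as a family of graded subspaces; `lcs 0` is by convention the whole algebra). -/
def lcs : ℕ → ∀ p : ℤ, Submodule ℚ (S.L p)
  | 0, _ => ⊤
  | 1, _ => ⊤
  | n + 2, p => Submodule.span ℚ
      {z : S.L p | ∃ (q r : ℤ) (h : q + r = p) (x : S.L q) (y : S.L r),
        y ∈ lcs (n + 1) r ∧ z = gcast (L := S.L) h (S.br x y)}

/-- `L` is connected: concentrated in nonnegative degrees. -/
def ConnectedCGL : Prop := ∀ p : ℤ, p < 0 → ∀ x : S.L p, x = 0

/-- `L₀` is a nilpotent group under the Baker–Campbell–Hausdorff product. -/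
def BCHNilpotent : Prop := @Group.IsNilpotent (S.L 0) S.bchGroup

/-- The exponential action `(α, β) ↦ e^{ad_α}(β)` of `L₀` on `L` is nilpotent:
some `n`-fold composite of the operators `φ_x = e^{ad_x} − id` vanishes identically. -/
def ExpActionNilpotent : Prop :=
  ∃ n : ℕ, 1 ≤ n ∧ ∀ xs : List (S.L 0), xs.length = n →
    ∀ (p : ℤ) (y : S.L p), S.phiList xs y = 0

/-- `L₀` is a nilpotent Lie algebra: all iterated brackets of some length `n` vanish. -/
def LieNilpotent0 : Prop :=
  ∃ n : ℕ, 1 ≤ n ∧ ∀ (xs : List (S.L 0)) (y : S.L 0),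
    xs.length + 1 = n → S.nestedBr xs y = 0

/-- `L₀` acts nilpotently on `L` via the adjoint action: some `n`-fold composite
`ad_{x₁} ∘ ⋯ ∘ ad_{xₙ}` vanishes identically. -/
def AdActionNilpotent : Prop :=
  ∃ n : ℕ, 1 ≤ n ∧ ∀ xs : List (S.L 0), xs.length = n →
    ∀ (p : ℤ) (y : S.L p), S.adList xs y = 0

/-- `L` is degreewise nilpotent: for each degree `p` there is `n ≥ 1` with `Lⁿ_p = 0`. -/
def DegreewiseNilpotent : Prop :=
  ∀ p : ℤ, ∃ n : ℕ, 1 ≤ n ∧ S.lcs n p = ⊥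

end CompleteGradedLie

end Paper

namespace Paper

/-!
Truncating `e^{ad_x}` at order `N` gives a polynomial `P = X + ⋯` in `ad_x`, and `ad_x ^ N`
is small for the filtration. Since `P / X` is prime to `X ^ N`, Bézout yields
`X = a P + b X ^ (N + 1)`: this is the series `ad_x = log (1 + φ_x)` modulo `F ^ N`.
Hence a closed `ad_x`-stable subspace containing `φ_x y` also contains `ad_x y`.
Let `K_j` be the space of elements killed by all `j`-fold composites of operators `φ_x`, a closed
subspace. If `y ∈ K_{j + 1}` then `φ_x y ∈ K_j`, so `ad_x y ∈ K_j` as soon as `K_j` is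
`ad_x`-stable; and `K_j` is stable because, inductively, `ad_x` maps it into `K_{j - 1} ⊆ K_j`.
-/

section

open Polynomial

lemma isCoprime_X_of_isUnit_coeff_zero {R : Type*} [CommRing R] {q : R[X]}
    (hq : IsUnit (q.coeff 0)) : IsCoprime X q := by
  have hC : IsCoprime X (C (q.coeff 0)) :=
    isCoprime_one_right.of_isCoprime_of_dvd_right (hq.map C).dvd
  rw [← X_mul_divX_add q]
  exact hC.mul_add_left_right _

lemma apply_mem_of_aeval_apply_mem {R M : Type*} [CommRing R] [AddCommGroup M] [Module R M]
    {T : Module.End R M} {W : Submodule R M} (hW : W ≤ W.comap T) {P : R[X]}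
    (hP₀ : P.coeff 0 = 0) (hP₁ : IsUnit (P.coeff 1)) {y : M} {N : ℕ}
    (hP : aeval T P y ∈ W) (hN : (T ^ N) y ∈ W) : T y ∈ W := by
  have hcop : IsCoprime (X ^ N) P.divX :=
    (isCoprime_X_of_isUnit_coeff_zero (by rwa [coeff_divX])).pow_left
  obtain ⟨a, b, hab⟩ := hcop
  have hX : X = a * X * X ^ N + b * P := by
    rw [← X_mul_divX_add P, hP₀, C_0, add_zero]
    linear_combination -X * hab
  have hT : T y = aeval T (a * X) ((T ^ N) y) + aeval T b (aeval T P y) := by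
    simpa using congr(aeval T $hX y)
  rw [hT]
  exact W.add_mem (aeval_apply_smul_mem_of_le_comap hN _ T hW)
    (aeval_apply_smul_mem_of_le_comap hP _ T hW)

end

lemma gcast_add {L : ℤ → Type*} [∀ p, Add (L p)] {p q : ℤ} (h : p = q) (x y : L p) :
    gcast (L := L) h (x + y) = gcast (L := L) h x + gcast (L := L) h y := by
  subst h; rfl

lemma gcast_smul {R : Type*} {L : ℤ → Type*} [∀ p, SMul R (L p)] {p q : ℤ} (h : p = q)
    (c : R) (x : L p) : gcast (L := L) h (c • x) = c • gcast (L := L) h x := by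
  subst h; rfl

namespace CompleteGradedLie

open Polynomial

variable (S : CompleteGradedLie)

/-- The operator `ad_x` on `L_p` as a linear endomorphism. -/
def adEnd (x : S.L 0) (p : ℤ) : Module.End ℚ (S.L p) where
  toFun := S.ad x
  map_add' y z := by simp only [ad, S.br_add_right, gcast_add]
  map_smul' c y := by simp only [ad, S.br_smul_right, gcast_smul, RingHom.id_apply]

/-- The Taylor polynomial of `e^{ad_x}` of degree `< n`, an endomorphism of `L_p`. -/
noncomputable def expAdTrunc (x : S.L 0) (p : ℤ) (n : ℕ) : Module.End ℚ (S.L p) :=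
  aeval (S.adEnd x p) (PowerSeries.trunc n (PowerSeries.exp ℚ))

variable {S} {x : S.L 0} {p : ℤ}

lemma adIter_eq_adEnd_pow (k : ℕ) (y : S.L p) : S.adIter x k y = (S.adEnd x p ^ k) y := by
  induction k with
  | zero => rfl
  | succ k ih => rw [pow_succ', Module.End.mul_apply, ← ih]; rfl

lemma adIter_mem_F (k : ℕ) (y : S.L p) : S.adIter x k y ∈ S.F k p :=
  S.F_antitone k.le_succ p (S.adIter_mem x k y)

lemma adEnd_pow_mem_F (k : ℕ) (y : S.L p) : (S.adEnd x p ^ k) y ∈ S.F k p :=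
  adIter_eq_adEnd_pow k y ▸ adIter_mem_F k y

lemma F_le_comap_adEnd (n : ℕ) : S.F n p ≤ (S.F n p).comap (S.adEnd x p) := fun _ hy ↦
  S.F_antitone (Nat.le_add_left n 1) p (S.gcast_mem _ (S.F_br (S.mem_F_one x) hy))

lemma expAd_sub_expAdTrunc_mem_F (y : S.L p) (n : ℕ) :
    S.expAd x y - S.expAdTrunc x p n y ∈ S.F n p := by
  have htrunc : S.expAdTrunc x p n y =
      ∑ k ∈ Finset.range n, (k.factorial : ℚ)⁻¹ • S.adIter x k y := by
    simp [expAdTrunc, aeval_def, PowerSeries.eval₂_trunc_eq_sum_range, PowerSeries.coeff_exp,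
      adIter_eq_adEnd_pow]
  rw [htrunc]
  exact Classical.choose_spec (S.complete p _ fun k ↦
    Submodule.smul_mem _ _ (adIter_mem_F k y)) n

lemma eq_expAd_of_forall_sub_expAdTrunc_mem_F {y z : S.L p}
    (h : ∀ n, z - S.expAdTrunc x p n y ∈ S.F n p) : z = S.expAd x y := by
  refine sub_eq_zero.mp (S.hausdorff p _ fun n ↦ ?_)
  simpa using sub_mem (h n) (expAd_sub_expAdTrunc_mem_F (x := x) y n)

variable (S x p) in
/-- The operator `φ_x = e^{ad_x} − id` on `L_p` as a linear endomorphism. -/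
noncomputable def phiEnd : Module.End ℚ (S.L p) where
  toFun := S.phi x
  map_add' y z := by
    have hexp : S.expAd x y + S.expAd x z = S.expAd x (y + z) := by
      refine eq_expAd_of_forall_sub_expAdTrunc_mem_F fun n ↦ ?_
      rw [map_add, add_sub_add_comm]
      exact add_mem (expAd_sub_expAdTrunc_mem_F y n) (expAd_sub_expAdTrunc_mem_F z n)
    rw [phi, ← hexp, add_sub_add_comm, phi, phi]
  map_smul' c y := by
    have hexp : c • S.expAd x y = S.expAd x (c • y) := by
      refine eq_expAd_of_forall_sub_expAdTrunc_mem_F fun n ↦ ?_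
      rw [map_smul, ← smul_sub]
      exact Submodule.smul_mem _ c (expAd_sub_expAdTrunc_mem_F y n)
    rw [phi, ← hexp, ← smul_sub, phi, RingHom.id_apply]

lemma F_le_comap_phiEnd (n : ℕ) : S.F n p ≤ (S.F n p).comap (S.phiEnd x p) := by
  intro y hy
  have htrunc : S.expAdTrunc x p n y ∈ S.F n p :=
    aeval_apply_smul_mem_of_le_comap hy _ _ (F_le_comap_adEnd n)
  have hexp : S.expAd x y ∈ S.F n p :=
    (Submodule.sub_mem_iff_left _ htrunc).mp (expAd_sub_expAdTrunc_mem_F y n)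
  exact sub_mem hexp hy

lemma phiList_append (xs ys : List (S.L 0)) (y : S.L p) :
    S.phiList (xs ++ ys) y = S.phiList xs (S.phiList ys y) := by
  induction xs with
  | nil => rfl
  | cons x xs ih => simp only [List.cons_append, phiList, ih]

variable (S) in
/-- A subspace `K` of `L_p` is closed for the topology defined by the filtration: it contains its
closure `⋂ₙ (K + Fⁿ)`. -/
def IsFClosed (K : Submodule ℚ (S.L p)) : Prop := ⨅ n, K ⊔ S.F n p ≤ K

lemma isFClosed_bot : S.IsFClosed (⊥ : Submodule ℚ (S.L p)) := fun y hy ↦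
  S.hausdorff p y (by simpa using hy)

lemma isFClosed_iInf {ι : Sort*} {K : ι → Submodule ℚ (S.L p)} (hK : ∀ i, S.IsFClosed (K i)) :
    S.IsFClosed (⨅ i, K i) :=
  le_iInf fun i ↦ le_trans (iInf_mono fun _ ↦ sup_le_sup_right (iInf_le K i) _) (hK i)

lemma IsFClosed.comap_phiEnd {K : Submodule ℚ (S.L p)} (hK : S.IsFClosed K) :
    S.IsFClosed (K.comap (S.phiEnd x p)) := by
  refine le_trans (le_of_le_of_eq (iInf_mono fun n ↦ ?_) (Submodule.comap_iInf _ _).symm)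
    (Submodule.comap_mono hK)
  exact sup_le (Submodule.comap_mono le_sup_left)
    ((F_le_comap_phiEnd n).trans (Submodule.comap_mono le_sup_right))

lemma IsFClosed.ad_mem_of_phi_mem {K : Submodule ℚ (S.L p)} (hK : S.IsFClosed K)
    (hstable : K ≤ K.comap (S.adEnd x p)) {y : S.L p} (hy : S.phi x y ∈ K) : S.ad x y ∈ K := by
  suffices ∀ n, S.ad x y ∈ K ⊔ S.F (n + 2) p from
    hK <| (Submodule.mem_iInf _).mpr fun n ↦
      sup_le_sup_left (S.F_antitone (Nat.le_add_right n 2) p) K (this n)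
  intro n
  have hW : K ⊔ S.F (n + 2) p ≤ (K ⊔ S.F (n + 2) p).comap (S.adEnd x p) :=
    sup_le (hstable.trans (Submodule.comap_mono le_sup_left))
      ((F_le_comap_adEnd _).trans (Submodule.comap_mono le_sup_right))
  have hP : aeval (S.adEnd x p) (PowerSeries.trunc (n + 2) (PowerSeries.exp ℚ) - 1) y ∈
      K ⊔ S.F (n + 2) p := by
    have hdiff := sub_mem (Submodule.mem_sup_left hy)
      (Submodule.mem_sup_right (expAd_sub_expAdTrunc_mem_F (x := x) y (n + 2)))
    rw [phi, sub_sub_sub_cancel_left] at hdiff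
    simpa [expAdTrunc] using hdiff
  exact apply_mem_of_aeval_apply_mem hW (by simp [PowerSeries.coeff_trunc])
    (by simp [PowerSeries.coeff_trunc, PowerSeries.coeff_exp, coeff_one]) hP
    (Submodule.mem_sup_right (adEnd_pow_mem_F (n + 2) y))

variable (S p) in
/-- The subspace `K_j` of the elements of `L_p` killed by all `j`-fold composites
`φ_{x₁} ∘ ⋯ ∘ φ_{xⱼ}` with `x₁, …, xⱼ ∈ X`, encoded by recursion on the innermost operator. -/
noncomputable def phiKer (X : Set (S.L 0)) : ℕ → Submodule ℚ (S.L p)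
  | 0 => ⊥
  | j + 1 => ⨅ x ∈ X, (phiKer X j).comap (S.phiEnd x p)

variable {X : Set (S.L 0)}

lemma mem_phiKer_succ {j : ℕ} {y : S.L p} :
    y ∈ S.phiKer p X (j + 1) ↔ ∀ x ∈ X, S.phi x y ∈ S.phiKer p X j := by
  simp only [phiKer, Submodule.mem_iInf, Submodule.mem_comap]
  rfl

lemma mem_phiKer_of_forall_phiList_eq_zero {n : ℕ} {y : S.L p}
    (h : ∀ xs : List (S.L 0), (∀ x ∈ xs, x ∈ X) → xs.length = n → S.phiList xs y = 0) :
    y ∈ S.phiKer p X n := by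
  induction n generalizing y with
  | zero => exact h [] (by simp) rfl
  | succ n ih =>
    refine mem_phiKer_succ.mpr fun x hx ↦ ih fun xs hxs hlen ↦ ?_
    have hzero := h (xs ++ [x]) (by simpa [or_imp, forall_and] using ⟨hxs, hx⟩) (by simp [hlen])
    rwa [phiList_append] at hzero

lemma isFClosed_phiKer (j : ℕ) : S.IsFClosed (S.phiKer p X j) := by
  induction j with
  | zero => exact isFClosed_bot
  | succ j ih => exact isFClosed_iInf fun _ ↦ isFClosed_iInf fun _ ↦ ih.comap_phiEnd

lemma phiKer_le_succ (j : ℕ) : S.phiKer p X j ≤ S.phiKer p X (j + 1) := by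
  induction j with
  | zero => exact bot_le
  | succ j ih => exact iInf₂_mono fun _ _ ↦ Submodule.comap_mono ih

lemma ad_mem_phiKer (hx : x ∈ X) {j : ℕ} {y : S.L p} (hy : y ∈ S.phiKer p X (j + 1)) :
    S.ad x y ∈ S.phiKer p X j := by
  induction j generalizing y with
  | zero =>
    exact (isFClosed_phiKer 0).ad_mem_of_phi_mem bot_le (mem_phiKer_succ.mp hy x hx)
  | succ j ih =>
    have hstable : S.phiKer p X (j + 1) ≤ (S.phiKer p X (j + 1)).comap (S.adEnd x p) :=
      fun _ hz ↦ phiKer_le_succ j (ih hz)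
    exact (isFClosed_phiKer (j + 1)).ad_mem_of_phi_mem hstable (mem_phiKer_succ.mp hy x hx)

lemma adList_mem_phiKer {xs : List (S.L 0)} (hxs : ∀ x ∈ xs, x ∈ X) {j : ℕ} {y : S.L p}
    (hy : y ∈ S.phiKer p X (j + xs.length)) : S.adList xs y ∈ S.phiKer p X j := by
  induction xs generalizing j with
  | nil => exact hy
  | cons x xs ih =>
    obtain ⟨hx, hxs⟩ := List.forall_mem_cons.mp hxs
    rw [List.length_cons, ← add_assoc, add_right_comm] at hy
    exact ad_mem_phiKer hx (ih hxs hy)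

end CompleteGradedLie

theorem CompleteGradedLie.adjoint_nilpotent_of_exp_nilpotent_general (S : CompleteGradedLie)
    (X : Set (S.L 0)) (n : ℕ) {p : ℤ} (y : S.L p)
    (h : ∀ xs : List (S.L 0), (∀ x ∈ xs, x ∈ X) → xs.length = n → S.phiList xs y = 0)
    (xs : List (S.L 0)) (hxs : ∀ x ∈ xs, x ∈ X) (hlen : xs.length = n) : S.adList xs y = 0 := by
  have hy : y ∈ S.phiKer p X (0 + xs.length) := by
    rw [zero_add, hlen]
    exact mem_phiKer_of_forall_phiList_eq_zero h
  exact adList_mem_phiKer hxs hy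

/-- **Lemma (from the proof of Proposition `nilpo`).** Let `L` be a complete graded Lie
algebra over `ℚ` concentrated in nonnegative degrees, and suppose there is `n ≥ 1` such
that all `n`-fold composites `(e^{ad_{x₁}} − id) ∘ ⋯ ∘ (e^{ad_{xₙ}} − id)` with
`x₁, …, xₙ ∈ L₀` vanish identically.  Then all `n`-fold composites
`ad_{x₁} ∘ ⋯ ∘ ad_{xₙ}` vanish identically; in particular `L₀` acts nilpotently on `L`
by the adjoint action. -/
theorem CompleteGradedLie.adjoint_nilpotent_of_exp_nilpotent (S : CompleteGradedLie.{u})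
    (hconn : S.ConnectedCGL) (n : ℕ) (hn : 1 ≤ n)
    (h : ∀ xs : List (S.L 0), xs.length = n → ∀ (p : ℤ) (y : S.L p), S.phiList xs y = 0) :
    (∀ xs : List (S.L 0), xs.length = n → ∀ (p : ℤ) (y : S.L p), S.adList xs y = 0) ∧
      S.AdActionNilpotent := by
  have main : ∀ xs : List (S.L 0), xs.length = n → ∀ (p : ℤ) (y : S.L p), S.adList xs y = 0 :=
    fun xs hxs p y ↦ S.adjoint_nilpotent_of_exp_nilpotent_general Set.univ n y
      (fun ys _ hys ↦ h ys hys p y) xs (fun _ _ ↦ Set.mem_univ _) hxs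
  exact ⟨main, n, hn, main⟩

end Paper
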